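/- arXiv:1808.10316 — 3 statements merged into one kernel-verified Lean document; each statement's English description precedes it below -/
import Mathlib

section
/- Let G be a finite simple graph on n vertices with arboricity at most α, where α ≥ 1 is a natural number. Then G contains a maximal independent set M with 2α · |M| ≥ n (i.e., |M| ≥ n/(2α)). -/
theorem low_deg {V : Type*} [Fintype V] [DecidableEq V]
    (G : SimpleGraph V) [DecidableRel G.Adj] (α : ℕ) (hα : 1 ≤ α)
    (harb : ∀ U : Finset V, 2 ≤ U.card →
      (G.edgeFinset.filter (fun e => ∀ v ∈ e, v ∈ U)).card ≤ α * (U.card - 1))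
    (U : Finset V) (hU : U.Nonempty) :
    ∃ v ∈ U, (U.filter (fun w => G.Adj v w)).card < 2 * α := by
  by_contra hcon
  push Not at hcon
  have h2 : 2 ≤ U.card := by
    obtain ⟨v, hv⟩ := hU
    have h := hcon v hv
    obtain ⟨w, hw⟩ : (U.filter (fun w => G.Adj v w)).Nonempty := by
      rw [← Finset.card_pos]; omega
    rw [Finset.mem_filter] at hw
    exact Finset.one_lt_card.2 ⟨v, hv, w, hw.1, hw.2.ne⟩
  have hE := harb U h2
  let P := U.sigma (fun v => U.filter (fun w => G.Adj v w))
  have hP : U.card * (2 * α) ≤ P.card := by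
    rw [Finset.card_sigma]
    exact Finset.card_nsmul_le_sum U _ _ hcon
  have hQ : P.card ≤ 2 * (G.edgeFinset.filter (fun e => ∀ v ∈ e, v ∈ U)).card := by
    apply Finset.card_le_mul_card_image_of_maps_to (f := fun p => s(p.1, p.2))
    · rintro ⟨a, b⟩ h
      simp only [P, Finset.mem_sigma, Finset.mem_filter] at h
      simp [h.1, h.2.1, h.2.2]
    · intro e _
      induction e using Sym2.ind with
      | _ a b =>
        refine (Finset.card_le_card (t := {⟨a, b⟩, ⟨b, a⟩}) ?_).trans Finset.card_le_two
        rintro ⟨c, d⟩ h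
        have h := (Finset.mem_filter.1 h).2
        rcases Sym2.eq_iff.1 h with ⟨h1, h2⟩ | ⟨h1, h2⟩ <;> simp_all
  obtain ⟨k, hk⟩ : ∃ k, U.card = k + 1 := ⟨U.card - 1, by omega⟩
  rw [hk] at hP hE
  simp only [Nat.add_sub_cancel] at hE
  nlinarith

theorem exists_mis_in {V : Type*} [Fintype V] [DecidableEq V]
    (G : SimpleGraph V) [DecidableRel G.Adj] (α : ℕ) (hα : 1 ≤ α)
    (harb : ∀ U : Finset V, 2 ≤ U.card →
      (G.edgeFinset.filter (fun e => ∀ v ∈ e, v ∈ U)).card ≤ α * (U.card - 1))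
    (U : Finset V) :
    ∃ M : Finset V, M ⊆ U ∧
      (∀ u ∈ M, ∀ v ∈ M, ¬ G.Adj u v) ∧
      (∀ v ∈ U, v ∉ M → ∃ u ∈ M, G.Adj v u) ∧
      U.card ≤ 2 * α * M.card := by
  induction U using Finset.strongInduction with
  | H U ih =>
    rcases U.eq_empty_or_nonempty with rfl | hU
    · exact ⟨∅, by simp⟩
    obtain ⟨v, hv, hd⟩ := low_deg G α hα harb U hU
    let N := insert v (U.filter (fun w => G.Adj v w))
    have hN : N ⊆ U := Finset.insert_subset hv (Finset.filter_subset _ _)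
    have hNc : N.card ≤ 2 * α := (Finset.card_insert_le _ _).trans hd
    have hmem : ∀ w, w ∈ U \ N ↔ w ∈ U ∧ w ≠ v ∧ ¬ G.Adj v w := by
      intro w
      simp only [N, Finset.mem_sdiff, Finset.mem_insert, Finset.mem_filter]
      tauto
    obtain ⟨M, hM, hi, hm, hc⟩ := ih (U \ N)
      (Finset.sdiff_ssubset hN ⟨v, Finset.mem_insert_self _ _⟩)
    have hvM : v ∉ M := fun h => ((hmem v).1 (hM h)).2.1 rfl
    refine ⟨insert v M, Finset.insert_subset hv (hM.trans Finset.sdiff_subset), ?_, ?_, ?_⟩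
    · intro a ha b hb
      rcases Finset.mem_insert.1 ha with rfl | ha2 <;>
        rcases Finset.mem_insert.1 hb with rfl | hb2
      · exact G.irrefl
      · exact ((hmem b).1 (hM hb2)).2.2
      · exact fun h => ((hmem a).1 (hM ha2)).2.2 h.symm
      · exact hi a ha2 b hb2
    · intro w hw hwM
      rw [Finset.mem_insert, not_or] at hwM
      by_cases h : G.Adj v w
      · exact ⟨v, Finset.mem_insert_self _ _, h.symm⟩
      · obtain ⟨u, hu, hwu⟩ := hm w ((hmem w).2 ⟨hw, hwM.1, h⟩) hwM.2
        exact ⟨u, Finset.mem_insert_of_mem hu, hwu⟩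
    · rw [Finset.card_insert_of_notMem hvM]
      have := Finset.card_sdiff_add_card_eq_card hN
      rw [Nat.mul_add]
      omega

/-- A finite simple graph on `n` vertices with arboricity at most
`α ≥ 1` contains a maximal independent set `M` with `2α · |M| ≥ n`. -/
theorem stmt1 {V : Type*} [Fintype V] [DecidableEq V]
    (G : SimpleGraph V) [DecidableRel G.Adj] (α : ℕ) (hα : 1 ≤ α)
    (harb : ∀ U : Finset V, 2 ≤ U.card →
      (G.edgeFinset.filter (fun e => ∀ v ∈ e, v ∈ U)).card ≤ α * (U.card - 1)) :
    ∃ M : Finset V,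
      (∀ u ∈ M, ∀ v ∈ M, ¬ G.Adj u v) ∧
      (∀ v, v ∉ M → ∃ u ∈ M, G.Adj v u) ∧
      Fintype.card V ≤ 2 * α * M.card := by
  obtain ⟨M, _, hi, hm, hc⟩ := exists_mis_in G α hα harb Finset.univ
  exact ⟨M, hi, fun v => hm v (Finset.mem_univ v), hc⟩
end

section
/- Let G be a finite simple graph with m ≥ 1 edges. Then the arboricity of G is at most ⌈√m⌉; that is, for every subset U of the vertices of G with |U| ≥ 2, the number of edges of G with both endpoints in U is at most ⌈√m⌉ · (|U| − 1). -/
/-- A finite simple graph with `m ≥ 1` edges has arboricity at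
most `⌈√m⌉`, where `⌈√m⌉` is the least natural number `c` with `c² ≥ m`:
every vertex subset `U` with `|U| ≥ 2` spans at most `⌈√m⌉ · (|U| − 1)`
edges. -/
theorem stmt3 {V : Type*} [Fintype V] [DecidableEq V]
    (G : SimpleGraph V) [DecidableRel G.Adj] (m : ℕ)
    (hm : m = G.edgeFinset.card) (hm1 : 1 ≤ m)
    (c : ℕ) (hc : IsLeast {k : ℕ | m ≤ k ^ 2} c) :
    ∀ U : Finset V, 2 ≤ U.card →
      (G.edgeFinset.filter (fun e => ∀ v ∈ e, v ∈ U)).card ≤ c * (U.card - 1) := by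
  intro U hU
  have hmc : m ≤ c ^ 2 := hc.1
  rcases Nat.lt_or_ge (U.card - 1) c with h | h
  · have hsub : G.edgeFinset.filter (fun e => ∀ v ∈ e, v ∈ U) ⊆
        U.offDiag.image (fun p : V × V => s(p.1, p.2)) := by
      intro e he
      induction e with
      | _ a b =>
        rw [Finset.mem_filter, SimpleGraph.mem_edgeFinset, SimpleGraph.mem_edgeSet] at he
        refine Finset.mem_image.2 ⟨(a, b), Finset.mem_offDiag.2 ⟨?_, ?_, he.1.ne⟩, rfl⟩
        · exact he.2 a (Sym2.mem_mk_left a b)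
        · exact he.2 b (Sym2.mem_mk_right a b)
    have h1 := (Finset.card_le_card hsub).trans Finset.card_image_le
    rw [Finset.offDiag_card, ← Nat.mul_sub_one] at h1
    exact h1.trans (Nat.mul_le_mul_right _ (by omega))
  · calc _ ≤ G.edgeFinset.card := Finset.card_filter_le _ _
      _ ≤ c ^ 2 := hm ▸ hmc
      _ = c * c := sq c
      _ ≤ c * (U.card - 1) := Nat.mul_le_mul_left _ h
end

section
/- Let α ≥ 1 and n ≥ 1 be natural numbers and set s = 8α. Let (p_j) and (u_j), for j = 1, 2, …, b, be sequences of natural numbers satisfying: (i) p_1 ≥ 1; (ii) for every j ≤ b, p_j · s < 4α(p_j + u_j); and (iii) for every j < b, p_{j+1} ≥ p_j + u_j. Then for every j ≤ b one has p_j < u_j and p_j ≥ 2^{j−1}. Consequently, if moreover p_j ≤ n for every j ≤ b, then b ≤ log₂ n + 1 (equivalently, 2^{b−1} ≤ n). -/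
/-- With `s = 8α`, `α ≥ 1`, `n ≥ 1`, if the sequences `p, u` of
naturals satisfy `p 1 ≥ 1`, `p j · s < 4α(p j + u j)` for `1 ≤ j ≤ b`, and
`p (j+1) ≥ p j + u j` for `1 ≤ j < b`, then for all `1 ≤ j ≤ b` we have
`p j < u j` and `p j ≥ 2^(j−1)`; consequently, if `p j ≤ n` for all
`1 ≤ j ≤ b`, then `2^(b−1) ≤ n`. -/
theorem stmt4 (α n b : ℕ) (hα : 1 ≤ α) (hn : 1 ≤ n)
    (s : ℕ) (hs : s = 8 * α)
    (p u : ℕ → ℕ)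
    (hp1 : 1 ≤ p 1)
    (hterm : ∀ j, 1 ≤ j → j ≤ b → p j * s < 4 * α * (p j + u j))
    (hstep : ∀ j, 1 ≤ j → j < b → p j + u j ≤ p (j + 1)) :
    (∀ j, 1 ≤ j → j ≤ b → p j < u j ∧ 2 ^ (j - 1) ≤ p j) ∧
    ((∀ j, 1 ≤ j → j ≤ b → p j ≤ n) → 2 ^ (b - 1) ≤ n) := by
  have h1 : ∀ j, 1 ≤ j → j ≤ b → p j < u j := by
    intro j hj hjb
    have h := hterm j hj hjb
    by_contra hc
    have hc' : u j ≤ p j := not_lt.mp hc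
    have h2 : 4 * α * (p j + u j) ≤ 4 * α * (p j + p j) :=
      Nat.mul_le_mul_left _ (by omega)
    have h3 : p j * s = 4 * α * (p j + p j) := by rw [hs]; ring
    omega
  have h2 : ∀ j, 1 ≤ j → j ≤ b → 2 ^ (j - 1) ≤ p j := by
    intro j hj
    induction j, hj using Nat.le_induction with
    | base => intro _; simpa using hp1
    | succ k hk ih =>
      intro hkb
      have a := ih (by omega)
      have c := h1 k hk (by omega)
      have d := hstep k hk (by omega)
      have e : 2 ^ (k + 1 - 1) = 2 * 2 ^ (k - 1) := by
        rw [← pow_succ']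
        congr 1
        omega
      omega
  refine ⟨fun j hj hjb => ⟨h1 j hj hjb, h2 j hj hjb⟩, fun h => ?_⟩
  rcases Nat.eq_zero_or_pos b with hb | hb
  · subst hb
    simpa using hn
  · exact (h2 b hb le_rfl).trans (h b hb le_rfl)
end
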